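/- Let q ≥ 3, let x ∈ ℝ have an infinite regular λ_q-CF [a_0; a_1, a_2, …], and let g ∈ G_q with lower row (c, d) satisfy c·x + d ≠ 0. Then there exist b_0 ∈ ℤ and nonzero integers b_1, b_2, … such that the λ_q-continued fraction [b_0; b_1, b_2, …] converges to g·x, the sequence (b_i)_{i≥1} contains no block of h_q+1 consecutive entries equal to 1 and no block of h_q+1 consecutive entries equal to −1, and (b_i)_{i≥1} has a common tail with (a_i)_{i≥1}. -/

import Mathlib

open Filter Topology

/-- `λ_q = 2 cos (π/q)`. -/
noncomputable def lamq (q : ℕ) : ℝ := 2 * Real.cos (Real.pi / q)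

/-- `h_q = (q-2)/2` for even `q` and `(q-3)/2` for odd `q`. -/
def hQ (q : ℕ) : ℕ := if Even q then (q - 2) / 2 else (q - 3) / 2

/-- Forbidden blocks for the nearest `λ_q`-multiple continued fractions.
For `ε ∈ {1,-1}`: the block `(ε)^{h_q+1}`; for even `q` the blocks `((ε)^{h_q}, ε·m)`, `m ≥ 1`;
for odd `q` (including `q = 3`, where `h_q = 0`) the blocks `((ε)^{h_q}, ε·2, (ε)^{h_q}, ε·m)`,
`m ≥ 1`. -/
def IsForbidden (q : ℕ) (L : List ℤ) : Prop :=
  ∃ ε : ℤ, (ε = 1 ∨ ε = -1) ∧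
    (L = List.replicate (hQ q + 1) ε ∨
      (if Even q then
        ∃ m : ℤ, 1 ≤ m ∧ L = List.replicate (hQ q) ε ++ [ε * m]
      else
        ∃ m : ℤ, 1 ≤ m ∧
          L = List.replicate (hQ q) ε ++ ε * 2 :: (List.replicate (hQ q) ε ++ [ε * m])))

/-- An infinite sequence is `q`-regular if no finite subblock is forbidden. -/
def RegularSeq (q : ℕ) (a : ℕ → ℤ) : Prop :=
  ∀ (l len : ℕ), ¬ IsForbidden q (List.ofFn fun j : Fin len => a (l + (j : ℕ)))

/-- An infinite sequence is dual `q`-regular if no reversed finite subblock is forbidden. -/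
def DualRegularSeq (q : ℕ) (a : ℕ → ℤ) : Prop :=
  ∀ (l len : ℕ), ¬ IsForbidden q (List.ofFn fun j : Fin len => a (l + (j : ℕ))).reverse

/-- A finite sequence is `q`-regular if no contiguous subblock is forbidden. -/
def RegularList (q : ℕ) (L : List ℤ) : Prop :=
  ∀ B : List ℤ, B <:+: L → ¬ IsForbidden q B

/-- Numerators of the convergents: `p₀ = a₀λ`, `p₁ = a₁λ·p₀ - 1`,
`pₙ = aₙλ·pₙ₋₁ - pₙ₋₂` (so that `p₋₁ = 1`, `p₋₂ = 0`).  Here `A n` is the digit `aₙ`. -/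
noncomputable def cfP (lam : ℝ) (A : ℕ → ℤ) : ℕ → ℝ
  | 0 => (A 0 : ℝ) * lam
  | 1 => (A 1 : ℝ) * lam * ((A 0 : ℝ) * lam) - 1
  | (n + 2) => (A (n + 2) : ℝ) * lam * cfP lam A (n + 1) - cfP lam A n

/-- Denominators of the convergents: `q₀ = 1`, `q₁ = a₁λ`,
`qₙ = aₙλ·qₙ₋₁ - qₙ₋₂` (so that `q₋₁ = 0`, `q₋₂ = -1`). -/
noncomputable def cfQ (lam : ℝ) (A : ℕ → ℤ) : ℕ → ℝ
  | 0 => 1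
  | 1 => (A 1 : ℝ) * lam
  | (n + 2) => (A (n + 2) : ℝ) * lam * cfQ lam A (n + 1) - cfQ lam A n

/-- The λ-continued fraction with digit sequence `A` converges to `x`. -/
def CFConvergesTo (lam : ℝ) (A : ℕ → ℤ) (x : ℝ) : Prop :=
  (∀ n, cfQ lam A n ≠ 0) ∧
    Filter.Tendsto (fun n => cfP lam A n / cfQ lam A n) Filter.atTop (nhds x)

/-- The value `p_L/q_L` of the finite continued fraction `[a₀; a₁, …, a_L]`. -/
noncomputable def cfValList (lam : ℝ) (a0 : ℤ) (L : List ℤ) : ℝ :=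
  cfP lam (fun i => (a0 :: L).getD i 0) L.length /
    cfQ lam (fun i => (a0 :: L).getD i 0) L.length

/-- The last denominator `q_L` of the finite continued fraction `[a₀; a₁, …, a_L]`. -/
noncomputable def cfDenList (lam : ℝ) (a0 : ℤ) (L : List ℤ) : ℝ :=
  cfQ lam (fun i => (a0 :: L).getD i 0) L.length

/-- The modified floor: `⌊t⌋* = ⌈t⌉ - 1` for `t > 0` and `⌊t⌋* = ⌊t⌋` for `t ≤ 0`. -/
noncomputable def floorstar (t : ℝ) : ℤ := if 0 < t then ⌈t⌉ - 1 else ⌊t⌋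

/-- The nearest `λ`-multiple: `⟨y⟩ = ⌊y/λ + 1/2⌋*`. -/
noncomputable def nearestLam (lam : ℝ) (x : ℝ) : ℤ := floorstar (x / lam + 1 / 2)

/-- The interval map `f_q` on `I_q = [-λ/2, λ/2]`. -/
noncomputable def fq (lam : ℝ) (x : ℝ) : ℝ :=
  if x = 0 then 0 else -1 / x - (nearestLam lam (-1 / x) : ℝ) * lam

/-- `R_q`: equal to `1` for even `q`, and the positive root of `R² + (2-λ_q)R = 1` for odd `q`. -/
noncomputable def Rq (q : ℕ) : ℝ :=
  if Even q then 1 else (lamq q - 2 + Real.sqrt ((2 - lamq q) ^ 2 + 4)) / 2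

/-- `r_q = R_q - λ_q`. -/
noncomputable def rq (q : ℕ) : ℝ := Rq q - lamq q

/-- The map `⟨·⟩*` used by the dual algorithm. -/
noncomputable def nearestDual (lam R y : ℝ) : ℤ :=
  if 0 ≤ y then floorstar (y / lam + 1 - R / lam) else floorstar (y / lam + R / lam)

/-- The dual interval map `f_q^*` on `I_{R_q} = [-R_q, R_q]`. -/
noncomputable def fqstar (lam R : ℝ) (x : ℝ) : ℝ :=
  if x = 0 then 0 else -1 / x - (nearestDual lam R (-1 / x) : ℝ) * lam

/-- The matrix `S = [[0,-1],[1,0]]` as an element of `SL(2,ℝ)`. -/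
noncomputable def matS : Matrix.SpecialLinearGroup (Fin 2) ℝ :=
  ⟨!![0, -1; 1, 0], by norm_num [Matrix.det_fin_two_of]⟩

/-- The matrix `T = [[1,λ],[0,1]]` as an element of `SL(2,ℝ)`. -/
noncomputable def matT (lam : ℝ) : Matrix.SpecialLinearGroup (Fin 2) ℝ :=
  ⟨!![1, lam; 0, 1], by norm_num [Matrix.det_fin_two_of]⟩

/-- The Hecke triangle group `G_q`, the subgroup of `SL(2,ℝ)` generated by `S` and `T_q`. -/
noncomputable def Hecke (q : ℕ) : Subgroup (Matrix.SpecialLinearGroup (Fin 2) ℝ) :=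
  Subgroup.closure {matS, matT (lamq q)}

/-- The Möbius action of `g` on `x ∈ ℝ`. -/
noncomputable def moeb (g : Matrix.SpecialLinearGroup (Fin 2) ℝ) (x : ℝ) : ℝ :=
  (g.val 0 0 * x + g.val 0 1) / (g.val 1 0 * x + g.val 1 1)

/-- `x` and `y` are `G_q`-equivalent. -/
def GqEquiv (q : ℕ) (x y : ℝ) : Prop :=
  ∃ g ∈ Hecke q, (g.val 1 0 * x + g.val 1 1 ≠ 0) ∧ moeb g x = y

/-- Two sequences have a common tail. -/
def CommonTail (a b : ℕ → ℤ) : Prop := ∃ m n : ℕ, ∀ k : ℕ, a (m + k) = b (n + k)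

/-- The period block of `ρ_q`: `(3)` for `q = 3`, `((1)^{h_q-1}, 2)` for even `q`
and `((1)^{h_q}, 2, (1)^{h_q-1}, 2)` for odd `q ≥ 5`. -/
def rhoBlock (q : ℕ) : List ℤ :=
  if q = 3 then [3]
  else if Even q then List.replicate (hQ q - 1) 1 ++ [2]
  else List.replicate (hQ q) 1 ++ 2 :: (List.replicate (hQ q - 1) 1 ++ [2])

/-- The periodic sequence `ρ_q`. -/
def rho (q : ℕ) (i : ℕ) : ℤ := (rhoBlock q).getD (i % (rhoBlock q).length) 0

/-- `x` has the infinite regular `λ_q`-CF with digit sequence `A` (with `A 0 = a₀`). -/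
def HasRegCF (q : ℕ) (x : ℝ) (A : ℕ → ℤ) : Prop :=
  (∀ i, A (i + 1) ≠ 0) ∧ RegularSeq q (fun i => A (i + 1)) ∧ CFConvergesTo (lamq q) A x

/-- `x` has the infinite dual regular `λ_q`-CF with digit sequence `A` (with `A 0 = a₀`). -/
def HasDualRegCF (q : ℕ) (x : ℝ) (A : ℕ → ℤ) : Prop :=
  (∀ i, A (i + 1) ≠ 0) ∧ DualRegularSeq q (fun i => A (i + 1)) ∧ CFConvergesTo (lamq q) A x

/-- The digits of `x` produced by the algorithm for `f_q`: `a_{i+1} = ⟨-1 / f_q^i(x)⟩`. -/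
noncomputable def digitSeq (lam : ℝ) (x : ℝ) : ℕ → ℤ :=
  fun i => nearestLam lam (-1 / (fq lam)^[i] x)

/-- The digits of `x` produced by the algorithm for `f_q^*`: `b_{i+1} = ⟨-1 / (f_q^*)^i(x)⟩*`. -/
noncomputable def digitSeqStar (lam R : ℝ) (x : ℝ) : ℕ → ℤ :=
  fun i => nearestDual lam R (-1 / (fqstar lam R)^[i] x)

/-- Digit matrix. -/
noncomputable def hkM (lam : ℝ) (a : ℤ) : Matrix (Fin 2) (Fin 2) ℝ := !![(a : ℝ) * lam, -1; 1, 0]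

/-- Product of the first `n` digit matrices. -/
noncomputable def hkP (lam : ℝ) (B : ℕ → ℤ) : ℕ → Matrix (Fin 2) (Fin 2) ℝ
  | 0 => 1
  | (n + 1) => hkP lam B n * hkM lam (B n)

def hkCons (a : ℤ) (B : ℕ → ℤ) : ℕ → ℤ
  | 0 => a
  | (n + 1) => B n

def hkRep (k : ℕ) (d : ℤ) (B : ℕ → ℤ) : ℕ → ℤ := fun n => if n < k then d else B (n - k)

def hkNB (h : ℕ) (B : ℕ → ℤ) : Prop :=
  ∀ ε : ℤ, (ε = 1 ∨ ε = -1) → ∀ l, ∃ k < h + 1, B (l + k) ≠ ε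

def hkR (lam : ℝ) (g : Matrix (Fin 2) (Fin 2) ℝ) (B A : ℕ → ℤ) : Prop :=
  ∃ (m n : ℕ) (σ : ℝ), (σ = 1 ∨ σ = -1) ∧ (∀ k, B (m + k) = A (n + k)) ∧
    hkP lam B m = σ • (g * hkP lam A n)

lemma hkP_add (lam : ℝ) (B : ℕ → ℤ) (m n : ℕ) :
    hkP lam B (m + n) = hkP lam B m * hkP lam (fun k => B (m + k)) n := by
  induction n with
  | zero => simp [hkP]
  | succ n ih => rw [← add_assoc]; simp only [hkP]; rw [ih, mul_assoc]

lemma hkP_cons (lam : ℝ) (a : ℤ) (B : ℕ → ℤ) (n : ℕ) :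
    hkP lam (hkCons a B) (n + 1) = hkM lam a * hkP lam B n := by
  rw [add_comm, hkP_add]
  simp [hkP, hkCons, add_comm 1]

lemma hkR_shift {lam : ℝ} {g : Matrix (Fin 2) (Fin 2) ℝ} {B A : ℕ → ℤ} {m n : ℕ} {σ : ℝ}
    (h1 : ∀ k, B (m + k) = A (n + k)) (h2 : hkP lam B m = σ • (g * hkP lam A n)) (j : ℕ) :
    hkP lam B (m + j) = σ • (g * hkP lam A (n + j)) := by
  rw [hkP_add, hkP_add, h2]
  have : (fun k => B (m + k)) = fun k => A (n + k) := funext h1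
  rw [this, smul_mul_assoc, mul_assoc]

lemma sgn_mul {a b : ℝ} (ha : a = 1 ∨ a = -1) (hb : b = 1 ∨ b = -1) :
    a * b = 1 ∨ a * b = -1 := by
  rcases ha with rfl | rfl <;> rcases hb with rfl | rfl <;> norm_num

lemma hkR_trans {lam : ℝ} {g g' : Matrix (Fin 2) (Fin 2) ℝ} {B A C : ℕ → ℤ}
    (h1 : hkR lam g B A) (h2 : hkR lam g' A C) : hkR lam (g * g') B C := by
  obtain ⟨m, n, σ, hσ, ht, he⟩ := h1
  obtain ⟨m', n', τ, hτ, ht', he'⟩ := h2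
  refine ⟨m + m', n' + n, σ * τ, sgn_mul hσ hτ, fun k => ?_, ?_⟩
  · rw [add_assoc, ht, show n + (m' + k) = m' + (n + k) by ring, ht', add_assoc]
  · rw [hkR_shift ht he, add_comm n m', hkR_shift ht' he', mul_smul_comm, smul_smul, mul_assoc]

lemma hkR_refl (lam : ℝ) (A : ℕ → ℤ) : hkR lam 1 A A :=
  ⟨0, 0, 1, Or.inl rfl, fun _ => rfl, by simp⟩

lemma hkR_cons {lam : ℝ} {g : Matrix (Fin 2) (Fin 2) ℝ} {B A : ℕ → ℤ}
    (h1 : hkR lam g B A) (a : ℤ) : hkR lam (hkM lam a * g) (hkCons a B) A := by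
  obtain ⟨m, n, σ, hσ, ht, he⟩ := h1
  refine ⟨m + 1, n, σ, hσ, fun k => ?_, ?_⟩
  · rw [show m + 1 + k = (m + k) + 1 by ring]; exact ht k
  · rw [hkP_cons, he, mul_smul_comm, mul_assoc]

lemma hkR_cons2 {lam : ℝ} {B A : ℕ → ℤ}
    (h1 : hkR lam 1 B A) (a : ℤ) : hkR lam 1 (hkCons a B) (hkCons a A) := by
  obtain ⟨m, n, σ, hσ, ht, he⟩ := h1
  refine ⟨m + 1, n + 1, σ, hσ, fun k => ?_, ?_⟩
  · rw [show m + 1 + k = (m + k) + 1 by ring, show n + 1 + k = (n + k) + 1 by ring]; exact ht k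
  · rw [hkP_cons, hkP_cons, he]; simp

lemma hkRep_zero (d : ℤ) (B : ℕ → ℤ) : hkRep 0 d B = B := by
  funext n; simp [hkRep]

lemma hkRep_succ (k : ℕ) (d : ℤ) (B : ℕ → ℤ) :
    hkRep (k + 1) d B = hkCons d (hkRep k d B) := by
  funext n; cases n <;> simp [hkRep, hkCons]

lemma hkRep_succ' (k : ℕ) (d : ℤ) (B : ℕ → ℤ) :
    hkRep (k + 1) d B = hkRep k d (hkCons d B) := by
  induction k with
  | zero => rw [hkRep_succ, hkRep_zero, hkRep_zero]
  | succ k ih => rw [hkRep_succ, ih, ← hkRep_succ]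

lemma hkR_rep {lam : ℝ} {B A : ℕ → ℤ}
    (h1 : hkR lam 1 B A) (k : ℕ) (d : ℤ) : hkR lam 1 (hkRep k d B) (hkRep k d A) := by
  induction k with
  | zero => simpa [hkRep_zero] using h1
  | succ k ih => rw [hkRep_succ, hkRep_succ]; exact hkR_cons2 ih d

lemma hkP_rep (lam : ℝ) (k : ℕ) (d : ℤ) (B : ℕ → ℤ) (n : ℕ) :
    hkP lam (hkRep k d B) (n + k) = hkM lam d ^ k * hkP lam B n := by
  induction k with
  | zero => simp [hkRep_zero]
  | succ k ih => rw [hkRep_succ, ← add_assoc, hkP_cons, ih, pow_succ', mul_assoc]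

lemma hkNB_rep {h k : ℕ} {d : ℤ} {B : ℕ → ℤ} (hB : hkNB h B) (h0 : B 0 ≠ d) (hk : k ≤ h) :
    hkNB h (hkRep k d B) := by
  intro ε hε l
  by_cases hl : l < k
  · by_cases hd : d = ε
    · refine ⟨k - l, by omega, ?_⟩
      have : ¬ (l + (k - l) < k) := by omega
      simp only [hkRep, this, if_false, show l + (k - l) - k = 0 by omega]
      rwa [← hd]
    · exact ⟨0, by omega, by simpa [hkRep, hl] using hd⟩
  · obtain ⟨j, hj, hne⟩ := hB ε hε (l - k)
    refine ⟨j, hj, ?_⟩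
    have : ¬ (l + j < k) := by omega
    simp only [hkRep, this, if_false, show l + j - k = l - k + j by omega]
    exact hne

lemma hkNB_cons {h : ℕ} {d : ℤ} {B : ℕ → ℤ} (hB : hkNB h B) (h1 : d ≠ 1) (h2 : d ≠ -1) :
    hkNB h (hkCons d B) := by
  intro ε hε l
  cases l with
  | zero =>
    refine ⟨0, by omega, ?_⟩
    rcases hε with rfl | rfl <;> simpa [hkCons]
  | succ l =>
    obtain ⟨j, hj, hne⟩ := hB ε hε l
    exact ⟨j, hj, by rw [show l + 1 + j = (l + j) + 1 by ring]; exact hne⟩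

/-! The matrix relation. -/

lemma rot_pow (θ : ℝ) (n : ℕ) :
    Real.sin θ • (!![2 * Real.cos θ, -1; 1, 0] : Matrix (Fin 2) (Fin 2) ℝ) ^ n =
      !![Real.sin (n * θ + θ), -Real.sin (n * θ); Real.sin (n * θ), -Real.sin (n * θ - θ)] := by
  induction n with
  | zero => ext i j; fin_cases i <;> fin_cases j <;> simp
  | succ n ih =>
    rw [pow_succ, ← smul_mul_assoc, ih, Matrix.mul_fin_two]
    push_cast
    have e1 : ((n : ℝ) + 1) * θ = n * θ + θ := by ring
    rw [e1]
    have h2 := Real.sin_sq_add_cos_sq θ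
    congr 1
    ext i j
    fin_cases i <;> fin_cases j <;>
      simp [Real.sin_add, Real.sin_sub, Real.cos_add]
    · linear_combination (Real.sin (n * θ)) * h2
    · ring

lemma rot_pow_q (θ : ℝ) (q : ℕ) (h0 : Real.sin θ ≠ 0) (hq : Real.sin (q * θ) = 0) :
    ∃ σ : ℝ, (σ = 1 ∨ σ = -1) ∧
      (!![2 * Real.cos θ, -1; 1, 0] : Matrix (Fin 2) (Fin 2) ℝ) ^ q = σ • 1 := by
  refine ⟨Real.cos (q * θ), ?_, ?_⟩
  · have := Real.sin_sq_add_cos_sq (q * θ)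
    rw [hq] at this
    apply sq_eq_sq_iff_eq_or_eq_neg.mp; linarith
  · apply smul_right_injective _ h0
    simp only
    rw [rot_pow]
    ext i j
    fin_cases i <;> fin_cases j <;>
      simp [Real.sin_add, Real.sin_sub, hq] <;> ring

lemma sin_pos_q {q : ℕ} (hq : 3 ≤ q) {j : ℕ} (h0 : 0 < j) (h1 : j < q) :
    0 < Real.sin (j * (Real.pi / q)) := by
  have hq' : (0 : ℝ) < q := by positivity
  apply Real.sin_pos_of_pos_of_lt_pi
  · have := Real.pi_pos
    positivity
  · rw [← mul_div_assoc, div_lt_iff₀ hq', mul_comm]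
    have : (j : ℝ) < q := by exact_mod_cast h1
    exact mul_lt_mul_of_pos_left this Real.pi_pos

lemma hkM_pow_q {q : ℕ} (hq : 3 ≤ q) {ε : ℤ} (hε : ε = 1 ∨ ε = -1) :
    ∃ σ : ℝ, (σ = 1 ∨ σ = -1) ∧ hkM (lamq q) ε ^ q = σ • 1 := by
  have hq' : (q : ℝ) ≠ 0 := by positivity
  have hs := sin_pos_q hq (j := 1) (by omega) (by omega)
  simp only [Nat.cast_one, one_mul] at hs
  rcases hε with rfl | rfl
  · obtain ⟨σ, h1, h2⟩ := rot_pow_q (Real.pi / q) q hs.ne'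
      (by rw [mul_div_cancel₀ _ hq']; exact Real.sin_pi)
    exact ⟨σ, h1, by simpa [hkM, lamq] using h2⟩
  · obtain ⟨σ, h1, h2⟩ := rot_pow_q (Real.pi - Real.pi / q) q
      (by rw [Real.sin_pi_sub]; exact hs.ne')
      (by rw [mul_sub, mul_div_cancel₀ _ hq', Real.sin_sub]; simp)
    refine ⟨σ, h1, ?_⟩
    rw [Real.cos_pi_sub] at h2
    simpa [hkM, lamq] using h2

lemma hk_key {q : ℕ} (hq : 3 ≤ q) {ε : ℤ} (hε : ε = 1 ∨ ε = -1) {h k : ℕ} (hk : h + k + 3 = q)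
    (a c : ℤ) : ∃ σ : ℝ, (σ = 1 ∨ σ = -1) ∧
      hkM (lamq q) (a - ε) * hkM (lamq q) (-ε) ^ k * hkM (lamq q) (c - ε) =
      σ • (hkM (lamq q) a * hkM (lamq q) ε ^ (h + 1) * hkM (lamq q) c) := by
  obtain ⟨σ, hσ, hV⟩ := hkM_pow_q hq hε
  set lam := lamq q
  set V := hkM lam ε with hVd
  set W := hkM lam (-ε) with hWd
  let S : Matrix (Fin 2) (Fin 2) ℝ := !![0, -1; 1, 0]
  let V' : Matrix (Fin 2) (Fin 2) ℝ := !![0, 1; -1, ε * lam]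
  have hVV : V * V' = 1 := by
    simp only [hVd, hkM, V', Matrix.mul_fin_two, Matrix.one_fin_two]; simp
  have hVVn : ∀ n, V ^ n * V' ^ n = 1 := by
    intro n
    induction n with
    | zero => simp
    | succ n ih =>
      rw [pow_succ, pow_succ', mul_assoc, ← mul_assoc V, hVV, one_mul, ih]
  have hSW : S * W = (-1 : ℝ) • (V' * S) := by
    simp only [hWd, hkM, V', S, Matrix.mul_fin_two]; simp
  have hSWn : ∀ n, S * W ^ n = ((-1 : ℝ) ^ n) • (V' ^ n * S) := by
    intro n
    induction n with
    | zero => simp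
    | succ n ih =>
      rw [pow_succ, ← mul_assoc, ih, smul_mul_assoc, mul_assoc, hSW, mul_smul_comm, smul_smul,
        ← mul_assoc, ← pow_succ, ← pow_succ]
  have hma : hkM lam (a - ε) = (-1 : ℝ) • (hkM lam a * S * W) := by
    simp only [hWd, hkM, S, Matrix.mul_fin_two]; simp; ring
  have hmc : hkM lam c = (-1 : ℝ) • (V * S * hkM lam (c - ε)) := by
    simp only [hVd, hkM, S, Matrix.mul_fin_two]; simp; ring
  have hVh : V ^ (h + 2) = σ • V' ^ (k + 1) := by
    calc V ^ (h + 2) = V ^ (h + 2) * (V ^ (k + 1) * V' ^ (k + 1)) := by rw [hVVn, mul_one]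
      _ = V ^ q * V' ^ (k + 1) := by
        rw [← mul_assoc, ← pow_add, show h + 2 + (k + 1) = q by omega]
      _ = _ := by rw [hV, smul_mul_assoc, one_mul]
  have hL : hkM lam (a - ε) * W ^ k * hkM lam (c - ε) =
      (-1 : ℝ) ^ k • (hkM lam a * (V' ^ (k + 1) * S) * hkM lam (c - ε)) := by
    rw [hma, smul_mul_assoc, mul_assoc (hkM lam a * S), ← pow_succ', mul_assoc (hkM lam a), hSWn]
    simp [pow_succ]
  have hRr : hkM lam a * V ^ (h + 1) * hkM lam c =
      (-σ) • (hkM lam a * (V' ^ (k + 1) * S) * hkM lam (c - ε)) := by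
    rw [hmc, mul_smul_comm, mul_assoc (hkM lam a), ← mul_assoc (V ^ (h + 1)),
      ← mul_assoc (V ^ (h + 1)), ← pow_succ, show h + 1 + 1 = h + 2 from rfl, hVh]
    simp [mul_assoc]
  refine ⟨(-1) ^ k * (-σ), sgn_mul (neg_one_pow_eq_or ℝ k) ?_, ?_⟩
  · rcases hσ with rfl | rfl <;> norm_num
  · rw [hL, hRr, smul_smul]
    have : σ * σ = 1 := by rcases hσ with rfl | rfl <;> norm_num
    congr 1
    linear_combination (-(-1 : ℝ) ^ k) * this

lemma hkR_key {q : ℕ} (hq : 3 ≤ q) {ε : ℤ} (hε : ε = 1 ∨ ε = -1) {h k : ℕ} (hk : h + k + 3 = q)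
    (a c : ℤ) (u : ℕ → ℤ) :
    hkR (lamq q) 1 (hkCons (a - ε) (hkRep k (-ε) (hkCons (c - ε) u)))
      (hkCons a (hkRep (h + 1) ε (hkCons c u))) := by
  obtain ⟨σ, hσ, he⟩ := hk_key hq hε hk a c
  refine ⟨1 + k + 1, 1 + (h + 1) + 1, σ, hσ, fun j => ?_, ?_⟩
  · rw [show 1 + k + 1 + j = (k + (j + 1)) + 1 by ring,
      show 1 + (h + 1) + 1 + j = (h + 1 + (j + 1)) + 1 by ring]
    simp only [hkCons, hkRep]
    rw [if_neg (by omega), if_neg (by omega), show k + (j + 1) - k = j + 1 by omega,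
      show h + 1 + (j + 1) - (h + 1) = j + 1 by omega]
  · rw [hkP_cons, hkP_cons, hkP_rep, hkP_rep, ← mul_assoc, ← mul_assoc]
    simpa [hkP, hkCons, mul_assoc] using he

/-! The rewriting procedure. -/

def hkPat (h : ℕ) (i : ℕ) : ℤ := if (h + 1) ∣ (i + 1) then 2 else 1

lemma hkPat_add (h i : ℕ) : hkPat h (h + 1 + i) = hkPat h i := by
  unfold hkPat
  simp only [add_assoc (h + 1), Nat.dvd_add_right (dvd_refl (h + 1))]

lemma hkPat_lt {h i : ℕ} (hi : i < h) : hkPat h i = 1 := by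
  unfold hkPat
  rw [if_neg]
  intro hd
  have := Nat.le_of_dvd (by omega) hd
  omega

lemma hkPat_self (h : ℕ) : hkPat h h = 2 := by simp [hkPat]

lemma hk_fix {q : ℕ} (hq : 3 ≤ q) {ε : ℤ} (hε : ε = 1 ∨ ε = -1) {h k : ℕ} (hk : h + k + 3 = q)
    (hkh : k ≤ h) (i : ℕ) : ∀ (a : ℤ) (s : ℕ → ℤ), (∀ j, s j ≠ 0) → hkNB h s →
    ε * s i ≠ hkPat h i →
    ∃ (a' : ℤ) (t : ℕ → ℤ), hkR (lamq q) 1 (hkCons a' t) (hkCons a (hkCons ε s)) ∧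
      (∀ j, t j ≠ 0) ∧ hkNB h t ∧ ((a' = a ∧ t = hkCons ε s) ∨ ε * a' < ε * a) := by
  induction i using Nat.strong_induction_on with
  | _ i ih =>
  intro a s hs0 hsN hi
  by_cases hN : hkNB h (hkCons ε s)
  · refine ⟨a, _, hkR_refl _ _, ?_, hN, Or.inl ⟨rfl, rfl⟩⟩
    intro j
    cases j with
    | zero => rcases hε with rfl | rfl <;> simp [hkCons]
    | succ j => exact hs0 j
  -- the block of `h` entries
  have hblock : ∀ j < h, s j = ε := by
    unfold hkNB at hN
    push Not at hN
    obtain ⟨δ, hδ, l, hl⟩ := hN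
    cases l with
    | succ l =>
      exfalso
      obtain ⟨j, hj, hne⟩ := hsN δ hδ l
      apply hne
      have := hl j hj
      rwa [show l + 1 + j = (l + j) + 1 by ring] at this
    | zero =>
      have h0 := hl 0 (by omega)
      simp only [hkCons] at h0
      intro j hj
      have := hl (j + 1) (by omega)
      rw [zero_add] at this
      simp only [hkCons] at this
      rw [this, h0]
  have hsh : s h ≠ ε := by
    intro hc
    obtain ⟨j, hj, hne⟩ := hsN ε hε 0
    rw [zero_add] at hne
    apply hne
    rcases Nat.lt_succ_iff_lt_or_eq.mp hj with h1 | h1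
    · exact hblock j h1
    · rw [h1, hc]
  obtain ⟨c, hc⟩ : ∃ c, c = s h := ⟨_, rfl⟩
  rw [← hc] at hsh
  have hc0 : c ≠ 0 := hc ▸ hs0 h
  obtain ⟨u, hu⟩ : ∃ u : ℕ → ℤ, u = fun j => s (h + 1 + j) := ⟨_, rfl⟩
  have hu0 : ∀ j, u j ≠ 0 := fun j => hu ▸ hs0 _
  have huN : hkNB h u := by
    intro δ hδ l
    obtain ⟨j, hj, hne⟩ := hsN δ hδ (h + 1 + l)
    exact ⟨j, hj, by rw [hu]; simpa [add_assoc] using hne⟩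
  have hsdec : hkCons ε s = hkRep (h + 1) ε (hkCons c u) := by
    rw [hkRep_succ]
    congr 1
    funext j
    simp only [hkRep]
    split_ifs with hj
    · exact hblock j hj
    · obtain ⟨r, rfl⟩ : ∃ r, j = h + r := ⟨j - h, by omega⟩
      rw [show h + r - h = r by omega]
      cases r with
      | zero => simp [hkCons, hc]
      | succ r => simp only [hkCons, hu]; congr 1; ring
  rw [hsdec]
  -- treat the tail
  have hW : ∀ b : ℤ, ∃ (b' : ℤ) (t : ℕ → ℤ),
      hkR (lamq q) 1 (hkCons b' t) (hkCons b (hkCons (c - ε) u)) ∧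
      (∀ j, t j ≠ 0) ∧ hkNB h t ∧ ((b' = b ∧ t 0 ≠ -ε) ∨ ε * b' < ε * b) := by
    intro b
    by_cases hc2 : c = 2 * ε
    · have hih : h < i := by
        by_contra hcon
        apply hi
        rcases Nat.lt_or_eq_of_le (not_lt.mp hcon) with h1 | h1
        · rw [hblock i h1, hkPat_lt h1]
          rcases hε with rfl | rfl <;> norm_num
        · rw [h1, ← hc, hc2, hkPat_self]
          rcases hε with rfl | rfl <;> norm_num
      obtain ⟨r, rfl⟩ : ∃ r, i = h + 1 + r := ⟨i - (h + 1), by omega⟩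
      rw [hkPat_add] at hi
      obtain ⟨b', t, h1, h2, h3, h4⟩ := ih r (by omega) b u hu0 huN (by rw [hu]; exact hi)
      refine ⟨b', t, ?_, h2, h3, ?_⟩
      · rw [hc2, show 2 * ε - ε = ε by ring]; exact h1
      · rcases h4 with ⟨h5, h6⟩ | h5
        · left
          refine ⟨h5, ?_⟩
          rw [h6]
          rcases hε with rfl | rfl <;> simp [hkCons]
        · exact Or.inr h5
    · refine ⟨b, _, hkR_refl _ _, ?_, hkNB_cons huN ?_ ?_, Or.inl ⟨rfl, ?_⟩⟩
      · intro j
        cases j with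
        | zero => simp only [hkCons]; omega
        | succ j => exact hu0 j
      · rcases hε with rfl | rfl <;> omega
      · rcases hε with rfl | rfl <;> omega
      · simp only [hkCons]; omega
  have hkey := hkR_key hq hε hk a c u
  cases k with
  | zero =>
    obtain ⟨b', t, h1, h2, h3, h4⟩ := hW (a - ε)
    rw [hkRep_zero] at hkey
    refine ⟨b', t, ?_, h2, h3, Or.inr ?_⟩
    · simpa using hkR_trans h1 hkey
    · rcases hε with rfl | rfl <;> omega
  | succ k =>
    obtain ⟨b', t, h1, h2, h3, h4⟩ := hW (-ε)
    refine ⟨a - ε, hkRep k (-ε) (hkCons b' t), ?_, ?_, ?_, Or.inr ?_⟩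
    · rw [hkRep_succ'] at hkey
      simpa using hkR_trans (hkR_cons2 (hkR_rep h1 k (-ε)) (a - ε)) hkey
    · intro j
      simp only [hkRep]
      split_ifs with hj
      · rcases hε with rfl | rfl <;> omega
      · cases j - k with
        | zero => simp only [hkCons]; rcases hε with rfl | rfl <;> omega
        | succ j => exact h2 j
    · rcases h4 with ⟨h5, h6⟩ | h5
      · rw [h5, ← hkRep_succ']
        exact hkNB_rep h3 h6 hkh
      · apply hkNB_rep (hkNB_cons h3 _ _) _ (by omega)
        · rcases hε with rfl | rfl <;> omega
        · rcases hε with rfl | rfl <;> omega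
        · simp only [hkCons]; rcases hε with rfl | rfl <;> omega
    · rcases hε with rfl | rfl <;> omega

lemma hQ_spec {q : ℕ} (hq : 3 ≤ q) :
    (Even q ∧ q = 2 * hQ q + 2 ∧ 1 ≤ hQ q) ∨ (¬ Even q ∧ q = 2 * hQ q + 3) := by
  unfold hQ
  split_ifs with h
  · left
    obtain ⟨r, hr⟩ := h
    exact ⟨⟨r, hr⟩, by omega, by omega⟩
  · right
    refine ⟨h, ?_⟩
    obtain ⟨r, hr⟩ := Nat.not_even_iff_odd.mp h
    omega

/-! Non-vanishing of denominators. -/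

lemma hk_den {q : ℕ} (hq : 3 ≤ q) (B : ℕ → ℤ) (h0 : ∀ i, B (i + 1) ≠ 0)
    (hN : hkNB (hQ q) (fun i => B (i + 1))) (n : ℕ) : cfQ (lamq q) B n ≠ 0 := by
  have hh : hQ q + 3 ≤ q := by rcases hQ_spec hq with h | h <;> omega
  obtain ⟨s, hs⟩ : ∃ s : ℕ → ℝ, s = fun j : ℕ => Real.sin ((j : ℝ) * (Real.pi / q)) := ⟨_, rfl⟩
  have hspos : ∀ j, 0 < j → j < q → 0 < s j := fun j h1 h2 => by
    rw [hs]; exact sin_pos_q hq h1 h2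
  have hsnn : ∀ j, 0 < j → j ≤ q → 0 ≤ s j := fun j h1 h2 => by
    rcases Nat.lt_or_eq_of_le h2 with h | h
    · exact (hspos j h1 h).le
    · have hq' : (q : ℝ) ≠ 0 := by positivity
      rw [hs]; simp only; rw [h, mul_div_cancel₀ _ hq', Real.sin_pi]
  have hrec : ∀ j, s (j + 2) = lamq q * s (j + 1) - s j := fun j => by
    rw [hs]
    simp only [lamq]
    push_cast
    have e1 : ((j : ℝ) + 2) * (Real.pi / q) = (j + 1) * (Real.pi / q) + Real.pi / q := by ring
    have e2 : (j : ℝ) * (Real.pi / q) = (j + 1) * (Real.pi / q) - Real.pi / q := by ring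
    rw [e1, e2, Real.sin_add, Real.sin_sub]; ring
  have hs0 : s 0 = 0 := by rw [hs]; simp
  have hlam : 0 < lamq q := by
    have h2 := hspos 2 (by omega) (by omega)
    have h1 := hspos 1 (by omega) (by omega)
    have := hrec 0
    simp only [zero_add, hs0, sub_zero] at this
    rw [this] at h2
    exact pos_of_mul_pos_left h2 h1.le
  -- the invariant
  have inv : ∀ n, cfQ (lamq q) B n ≠ 0 ∧ ∃ (ε : ℤ) (m j : ℕ) (r : ℝ), (ε = 1 ∨ ε = -1) ∧
      n + 1 = m + j ∧ j ≤ hQ q ∧ (∀ i < j, B (m + i + 1) = ε) ∧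
      s (j + 2) / s (j + 1) ≤ ε * r ∧ cfQ (lamq q) B (n + 1) = r * cfQ (lamq q) B n := by
    intro n
    induction n with
    | zero =>
      refine ⟨by simp [cfQ], ?_⟩
      have hsl : s (0 + 2) / s (0 + 1) = lamq q := by
        rw [hrec, zero_add, hs0, sub_zero]
        exact mul_div_cancel_right₀ _ (hspos 1 (by omega) (by omega)).ne'
      have hb := h0 0
      rcases lt_or_gt_of_ne hb with hb | hb
      · refine ⟨-1, 1, 0, B 1 * lamq q, Or.inr rfl, rfl, by omega, by simp, ?_, by simp [cfQ]⟩
        rw [hsl]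
        have : (B 1 : ℝ) ≤ -1 := by exact_mod_cast (by simpa using Int.le_sub_one_of_lt hb)
        push_cast; nlinarith
      · refine ⟨1, 1, 0, B 1 * lamq q, Or.inl rfl, rfl, by omega, by simp, ?_, by simp [cfQ]⟩
        rw [hsl]
        have : (1 : ℝ) ≤ B 1 := by exact_mod_cast hb
        push_cast; nlinarith
    | succ n ih =>
      obtain ⟨hne, ε, m, j, r, hε, hmn, hj, hB, hr, hrq⟩ := ih
      have p1 := hspos (j + 1) (by omega) (by omega)
      have p2 := hspos (j + 2) (by omega) (by omega)
      have p3 := hsnn (j + 3) (by omega) (by omega)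
      have hrec3 : s (j + 3) = lamq q * s (j + 2) - s (j + 1) := hrec (j + 1)
      have hrpos : 0 < (ε : ℝ) * r := lt_of_lt_of_le (div_pos p2 p1) hr
      have hr0 : r ≠ 0 := by rintro rfl; simp at hrpos
      have hne1 : cfQ (lamq q) B (n + 1) ≠ 0 := by rw [hrq]; exact mul_ne_zero hr0 hne
      have hstep : cfQ (lamq q) B (n + 1 + 1) =
          (B (n + 2) * lamq q - 1 / r) * cfQ (lamq q) B (n + 1) := by
        rw [show n + 1 + 1 = n + 2 from rfl, cfQ, sub_mul]
        congr 1
        rw [hrq]; field_simp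
      have hεε : (ε : ℝ) * ε = 1 := by rcases hε with rfl | rfl <;> norm_num
      have hinv : (ε : ℝ) * (1 / r) = 1 / (ε * r) := by
        have : (ε : ℝ) ≠ 0 := by rintro h; rw [h] at hεε; simp at hεε
        field_simp
        linear_combination hεε
      have hle : (ε : ℝ) * (1 / r) ≤ s (j + 1) / s (j + 2) := by
        rw [hinv, one_div, ← inv_div (s (j + 2))]
        exact inv_anti₀ (div_pos p2 p1) hr
      have hle2 : s (j + 1) / s (j + 2) ≤ lamq q := by
        rw [div_le_iff₀ p2]; linarith
      have hpos' : 0 < (ε : ℝ) * (1 / r) := by rw [hinv]; positivity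
      have hsl : s (0 + 2) / s (0 + 1) = lamq q := by
        rw [hrec, zero_add, hs0, sub_zero]
        exact mul_div_cancel_right₀ _ (hspos 1 (by omega) (by omega)).ne'
      refine ⟨hne1, ?_⟩
      by_cases hb : B (n + 2) = ε
      · have hB' : ∀ i < j + 1, B (m + i + 1) = ε := by
          intro i hi
          rcases Nat.lt_succ_iff_lt_or_eq.mp hi with h1 | h1
          · exact hB i h1
          · rw [h1, ← hmn]; exact hb
        refine ⟨ε, m, j + 1, _, hε, by omega, ?_, hB', ?_, hstep⟩
        · by_contra hcon
          obtain ⟨i, hi, hne⟩ := hN ε hε m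
          exact hne (hB' i (by omega))
        · rw [show j + 1 + 2 = j + 3 from rfl, show j + 1 + 1 = j + 2 from rfl, hb, mul_sub,
            ← mul_assoc, hεε, one_mul, hrec3, sub_div, mul_div_cancel_right₀ _ p2.ne']
          linarith
      · obtain ⟨δ, hδ, hb2⟩ : ∃ δ : ℤ, (δ = 1 ∨ δ = -1) ∧
            ((δ = -ε ∧ 1 ≤ δ * B (n + 2)) ∨ (δ = ε ∧ 2 ≤ δ * B (n + 2))) := by
          have hb0 := h0 (n + 1)
          rw [show n + 1 + 1 = n + 2 from rfl] at hb0
          rcases lt_or_gt_of_ne hb0 with hb1 | hb1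
          · refine ⟨-1, Or.inr rfl, ?_⟩
            rcases hε with rfl | rfl
            · left; omega
            · right; omega
          · refine ⟨1, Or.inl rfl, ?_⟩
            rcases hε with rfl | rfl
            · right; omega
            · left; omega
        refine ⟨δ, n + 2, 0, _, hδ, rfl, by omega, by simp, ?_, hstep⟩
        rw [hsl, mul_sub, ← mul_assoc]
        rcases hb2 with ⟨h1, h2⟩ | ⟨h1, h2⟩
        · have h2' : (1 : ℝ) ≤ δ * B (n + 2) := by exact_mod_cast h2
          have h3 : (δ : ℝ) * (1 / r) = - (ε * (1 / r)) := by rw [h1]; push_cast; ring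
          rw [h3]
          nlinarith
        · have h2' : (2 : ℝ) ≤ δ * B (n + 2) := by exact_mod_cast h2
          have h3 : (δ : ℝ) * (1 / r) = ε * (1 / r) := by rw [h1]
          rw [h3]
          nlinarith
  exact (inv n).1

/-! Consequences of regularity. -/

lemma hk_reg_NB {q : ℕ} {a : ℕ → ℤ} (hr : RegularSeq q a) : hkNB (hQ q) a := by
  intro ε hε l
  by_contra hcon
  push Not at hcon
  apply hr l (hQ q + 1)
  refine ⟨ε, hε, Or.inl ?_⟩
  apply List.ext_getElem
  · simp
  · intro i h1 h2
    simp only [List.getElem_ofFn, List.getElem_replicate]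
    exact hcon i (by simpa using h1)

lemma hk_reg_pat {q : ℕ} {a : ℕ → ℤ} (hr : RegularSeq q a) {ε : ℤ}
    (hε : ε = 1 ∨ ε = -1) (l : ℕ) : ∃ i, ε * a (l + i) ≠ hkPat (hQ q) i := by
  by_contra hcon
  push Not at hcon
  have ha : ∀ i, a (l + i) = ε * hkPat (hQ q) i := by
    intro i
    rw [← hcon i, ← mul_assoc]
    rcases hε with rfl | rfl <;> simp
  generalize hh : hQ q = h at *
  have hb : ∀ i < h, a (l + i) = ε := fun i hi => by rw [ha, hkPat_lt hi, mul_one]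
  have hb2 : a (l + h) = ε * 2 := by rw [ha, hkPat_self]
  have hlist : ∀ (l : ℕ) (c : ℤ) (L : List ℤ), (∀ i < h, a (l + i) = ε) → a (l + h) = c →
      (∀ i (hi : i < L.length), a (l + h + 1 + i) = L[i]) →
      (List.ofFn fun j : Fin (h + 1 + L.length) => a (l + (j : ℕ))) =
        List.replicate h ε ++ c :: L := by
    intro l c L h1 h2 h3
    apply List.ext_getElem
    · simp; ring
    · intro i hi hi'
      simp only [List.getElem_ofFn]
      rw [List.getElem_append]
      split_ifs with hlt
      · simp only [List.length_replicate] at hlt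
        rw [List.getElem_replicate]; exact h1 i hlt
      · simp only [List.length_replicate] at hlt ⊢
        obtain ⟨r, rfl⟩ : ∃ r, i = h + r := ⟨i - h, by omega⟩
        simp only [show h + r - h = r by omega]
        cases r with
        | zero => simpa using h2
        | succ r =>
          simp only [List.getElem_cons_succ]
          rw [← h3 r (by simp at hi; omega)]
          congr 1; ring
  by_cases hev : Even q
  · apply hr l (h + 1 + 0)
    refine ⟨ε, hε, Or.inr ?_⟩
    rw [if_pos hev, hh]
    exact ⟨2, by norm_num, hlist l (ε * 2) [] hb hb2 (by simp)⟩
  · have e2 := hlist (l + h + 1) (ε * 2) []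
      (fun i hi => by
        rw [show l + h + 1 + i = l + (h + 1 + i) by ring, ha, hkPat_add, hkPat_lt hi, mul_one])
      (by rw [show l + h + 1 + h = l + (h + 1 + h) by ring, ha, hkPat_add, hkPat_self]) (by simp)
    apply hr l (h + 1 + (List.replicate h ε ++ [ε * 2]).length)
    refine ⟨ε, hε, Or.inr ?_⟩
    rw [if_neg hev, hh]
    refine ⟨2, by norm_num, hlist l (ε * 2) _ hb hb2 ?_⟩
    intro i hi
    simp only [← e2, List.getElem_ofFn]

lemma hk_cons_eta (B : ℕ → ℤ) : hkCons (B 0) (fun i => B (i + 1)) = B := by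
  funext n; cases n <;> rfl

lemma hk_main {q : ℕ} (hq : 3 ≤ q) (A : ℕ → ℤ) (hA0 : ∀ i, A (i + 1) ≠ 0)
    (hr : RegularSeq q (fun i => A (i + 1)))
    (g : Matrix.SpecialLinearGroup (Fin 2) ℝ) (hg : g ∈ Hecke q) :
    ∃ (b : ℤ) (s : ℕ → ℤ), (∀ i, s i ≠ 0) ∧ hkNB (hQ q) s ∧
      hkR (lamq q) g.val (hkCons b s) A := by
  have hT : ∀ (g : Matrix (Fin 2) (Fin 2) ℝ) (b e : ℤ) (s : ℕ → ℤ), 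
      hkR (lamq q) g (hkCons b s) A →
      hkR (lamq q) (!![1, e * lamq q; 0, 1] * g) (hkCons (b + e) s) A := by
    rintro g b e s ⟨m, n, σ, hσ, ht, he⟩
    refine ⟨m + 1, n + 1, σ, hσ, fun k => ?_, ?_⟩
    · rw [show n + 1 + k = n + (k + 1) by ring, ← ht,
        show m + 1 + k = (m + k) + 1 by ring, show m + (k + 1) = (m + k) + 1 by ring]
      rfl
    · have := hkR_shift ht he 1
      rw [hkP_cons] at this ⊢
      have hM : hkM (lamq q) (b + e) = !![1, e * lamq q; 0, 1] * hkM (lamq q) b := by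
        simp [hkM, Matrix.mul_fin_two]; ring
      rw [hM, mul_assoc, this, mul_smul_comm, mul_assoc]
  have hneg : ∀ (g : Matrix (Fin 2) (Fin 2) ℝ) (B : ℕ → ℤ),
      hkR (lamq q) g B A → hkR (lamq q) (-g) B A := by
    rintro g B ⟨m, n, σ, hσ, ht, he⟩
    refine ⟨m, n, -σ, ?_, ht, by rw [he]; simp⟩
    rcases hσ with rfl | rfl <;> simp
  have hSstep : ∀ (g : Matrix (Fin 2) (Fin 2) ℝ) (b : ℤ) (s : ℕ → ℤ), (∀ i, s i ≠ 0) →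
      hkNB (hQ q) s → hkR (lamq q) g (hkCons b s) A →
      ∃ (b : ℤ) (s : ℕ → ℤ), (∀ i, s i ≠ 0) ∧ hkNB (hQ q) s ∧
        hkR (lamq q) (!![0, -1; 1, 0] * g) (hkCons b s) A := by
    intro g b s hs0 hsN hR
    have hR' := hkR_cons hR 0
    have hM0 : hkM (lamq q) 0 = !![0, -1; 1, 0] := by simp [hkM]
    rw [hM0] at hR'
    by_cases hb : b = 0
    · subst hb
      have h1 : hkR (lamq q) 1 s (hkCons 0 (hkCons 0 s)) := by
        refine ⟨0, 2, -1, Or.inr rfl, fun k => ?_, ?_⟩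
        · rw [add_comm 2, zero_add]; rfl
        · simp [hkP, hkCons, hM0, Matrix.mul_fin_two, Matrix.one_fin_two]
      have h2 := hkR_trans h1 hR'
      rw [one_mul, ← hk_cons_eta s] at h2
      refine ⟨s 0, _, fun i => hs0 _, ?_, h2⟩
      intro ε hε l
      obtain ⟨j, hj, hne⟩ := hsN ε hε (l + 1)
      exact ⟨j, hj, by simpa [add_right_comm] using hne⟩
    · by_cases hb1 : b = 1 ∨ b = -1
      · have hpat : ∃ i, b * s i ≠ hkPat (hQ q) i := by
          by_contra hcon
          push Not at hcon
          obtain ⟨m, n, σ, hσ, ht, he⟩ := hR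
          obtain ⟨i, hi⟩ := hk_reg_pat hr hb1 (n + hQ q * m)
          apply hi
          have e : A (n + hQ q * m + i + 1) = s ((hQ q + 1) * m + i) := by
            have := ht (hQ q * m + i + 1)
            rw [show m + (hQ q * m + i + 1) = ((hQ q + 1) * m + i) + 1 by ring] at this
            simp only [hkCons] at this
            rw [this]; congr 1; ring
          rw [e, hcon]
          unfold hkPat
          simp only [add_assoc ((hQ q + 1) * m), Nat.dvd_add_right (Dvd.intro m rfl : hQ q + 1 ∣ (hQ q + 1) * m)]
        obtain ⟨i, hi⟩ := hpat
        obtain ⟨k, hk, hkh⟩ : ∃ k, hQ q + k + 3 = q ∧ k ≤ hQ q := by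
          refine ⟨q - 3 - hQ q, ?_⟩
          rcases hQ_spec hq with h | h <;> omega
        obtain ⟨a', t, h1, h2, h3, -⟩ := hk_fix hq hb1 hk hkh i 0 s hs0 hsN hi
        exact ⟨a', t, h2, h3, by simpa using hkR_trans h1 hR'⟩
      · push Not at hb1
        refine ⟨0, _, ?_, hkNB_cons hsN hb1.1 hb1.2, hR'⟩
        intro i
        cases i with
        | zero => exact hb
        | succ i => exact hs0 i
  induction hg using Subgroup.closure_induction_left with
  | one => exact ⟨A 0, _, hA0, hk_reg_NB hr, by rw [hk_cons_eta]; exact hkR_refl _ _⟩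
  | mul_left x hx y hy ih =>
    obtain ⟨b, s, h0, hN, hR⟩ := ih
    rcases hx with rfl | hx
    · rw [Matrix.SpecialLinearGroup.coe_mul]
      exact hSstep _ b s h0 hN hR
    · rw [Set.mem_singleton_iff] at hx
      subst hx
      refine ⟨b + 1, s, h0, hN, ?_⟩
      have := hT _ b 1 s hR
      rw [Matrix.SpecialLinearGroup.coe_mul]
      rwa [Int.cast_one, one_mul] at this
  | inv_mul_cancel x hx y hy ih =>
    obtain ⟨b, s, h0, hN, hR⟩ := ih
    rcases hx with rfl | hx
    · obtain ⟨b', s', h0', hN', hR'⟩ := hSstep _ b s h0 hN hR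
      refine ⟨b', s', h0', hN', ?_⟩
      have := hneg _ _ hR'
      rw [← neg_mul] at this
      have e : (matS⁻¹).val = -!![0, -1; 1, 0] := by
        rw [Matrix.SpecialLinearGroup.coe_inv, Matrix.adjugate_fin_two]; simp [matS]
      rw [Matrix.SpecialLinearGroup.coe_mul, e]
      exact this
    · rw [Set.mem_singleton_iff] at hx
      subst hx
      refine ⟨b + -1, s, h0, hN, ?_⟩
      have := hT _ b (-1) s hR
      have e : ((matT (lamq q))⁻¹).val = !![1, ((-1 : ℤ) : ℝ) * lamq q; 0, 1] := by
        rw [Matrix.SpecialLinearGroup.coe_inv, Matrix.adjugate_fin_two]; simp [matT]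
      rw [Matrix.SpecialLinearGroup.coe_mul, e]
      exact this

lemma hkP_cf (lam : ℝ) (B : ℕ → ℤ) (n : ℕ) :
    hkP lam B (n + 2) = !![cfP lam B (n + 1), -cfP lam B n; cfQ lam B (n + 1), -cfQ lam B n] := by
  induction n with
  | zero =>
    simp [hkP, hkM, cfP, cfQ, Matrix.mul_fin_two]; ring
  | succ n ih =>
    rw [hkP, ih, hkM, Matrix.mul_fin_two]
    simp only [cfP, cfQ]
    congr 1
    ext i j
    fin_cases i <;> fin_cases j <;> simp <;> ring

/-- If `x` has an infinite regular `λ_q`-CF and `g ∈ G_q` with `c·x + d ≠ 0`, then `g·x`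
has an infinite `λ_q`-CF whose digits `(b_i)_{i≥1}` contain no block of `h_q + 1`
consecutive `1`'s nor of `h_q + 1` consecutive `-1`'s, and whose tail coincides with the
tail of the expansion of `x`. -/
theorem stmt7 (q : ℕ) (hq : 3 ≤ q) (x : ℝ) (A : ℕ → ℤ) (hA : HasRegCF q x A)
    (g : Matrix.SpecialLinearGroup (Fin 2) ℝ) (hg : g ∈ Hecke q)
    (hden : g.val 1 0 * x + g.val 1 1 ≠ 0) :
    ∃ B : ℕ → ℤ, (∀ i, B (i + 1) ≠ 0) ∧
      CFConvergesTo (lamq q) B (moeb g x) ∧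
      (∀ l : ℕ, ∃ k < hQ q + 1, B (l + 1 + k) ≠ 1) ∧
      (∀ l : ℕ, ∃ k < hQ q + 1, B (l + 1 + k) ≠ -1) ∧
      CommonTail (fun i => B (i + 1)) (fun i => A (i + 1)) := by
  obtain ⟨hA0, hr, hAq, hAt⟩ := hA
  obtain ⟨b, s, hs0, hsN, m, n, σ, hσ, ht, he⟩ := hk_main hq A hA0 hr g hg
  have hdenB := hk_den hq (hkCons b s) hs0 hsN
  refine ⟨hkCons b s, hs0, ⟨hdenB, ?_⟩, ?_, ?_, ?_⟩
  · have hσ0 : σ ≠ 0 := by rcases hσ with rfl | rfl <;> norm_num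
    have key : ∀ k, cfP (lamq q) (hkCons b s) (k + (m + 1)) /
        cfQ (lamq q) (hkCons b s) (k + (m + 1)) =
        moeb g (cfP (lamq q) A (k + (n + 1)) / cfQ (lamq q) A (k + (n + 1))) := by
      intro k
      have h1 := hkR_shift ht he (k + 2)
      rw [← add_assoc, ← add_assoc, hkP_cf, hkP_cf] at h1
      rw [show k + (m + 1) = m + k + 1 by ring, show k + (n + 1) = n + k + 1 by ring]
      have e1 := congrFun (congrFun h1 0) 0
      have e2 := congrFun (congrFun h1 1) 0
      simp [Matrix.mul_apply, Fin.sum_univ_two] at e1 e2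
      have hd := hAq (n + k + 1)
      rw [e1, e2, mul_div_mul_left _ _ hσ0, moeb]
      rw [← mul_div_mul_right (_ * (_ / _) + _) _ hd]
      congr 1
      · field_simp
      · field_simp
    have hA' := (tendsto_add_atTop_iff_nat (n + 1)).mpr hAt
    rw [← tendsto_add_atTop_iff_nat (m + 1)]
    simp only [key]
    unfold moeb
    exact ((hA'.const_mul _).add_const _).div ((hA'.const_mul _).add_const _) hden
  · intro l
    obtain ⟨k, hk, hne⟩ := hsN 1 (Or.inl rfl) l
    exact ⟨k, hk, by rw [add_right_comm]; exact hne⟩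
  · intro l
    obtain ⟨k, hk, hne⟩ := hsN (-1) (Or.inr rfl) l
    exact ⟨k, hk, by rw [add_right_comm]; exact hne⟩
  · exact ⟨m, n, fun k => ht (k + 1)⟩
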